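/- arXiv:2303.04075 — 4 statements merged into one kernel-verified Lean document; each statement's English description precedes it below -/
import Mathlib

section
/- Let N ≥ 1, let y ∈ {0,1}^N be a binary vector, let q ∈ (0,1), and let u, v ∈ ℝ^N have positive entries. For t ∈ {0,1}^N and p ∈ [0,1], define F(t,p) = ∏_{i : t_i = 1} u_i · q^{1-y_i} (1-q)^{y_i} · ∏_{i : t_i = 0} v_i · p^{1-y_i} (1-p)^{y_i} (with 0^0 = 1). Define the finite set P = { T_n / T_d : T_d ∈ {1,…,N}, T_n ∈ {0,…,T_d} }. Then P has cardinality at most N² + 1, and there exists a pair (t*, p*) ∈ {0,1}^N × [0,1] maximizing F over {0,1}^N × [0,1] with p* ∈ P. -/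
open Finset

/-!
For a fixed trust vector `t`, let `a` and `b` be the numbers of zeros and ones of `y` on the
set of robots with `t i = 0`, and let `n = a + b`. As a function of `p`, the objective is a
nonnegative constant times the Bernoulli likelihood `p ^ a * (1 - p) ^ b`, whose maximum on
`[0, 1]` is attained at the empirical frequency `a / n` (`bernoulli_likelihood_le`), an element
of `P`; if `n = 0` the value of `p` is irrelevant. Hence every pair `(t, p)` is dominated by a
pair `(t, p')` with `p' ∈ P`, and the maximum over the finite set `{0,1}ᴺ × P` is global.

The cardinality bound holds because all fractions with numerator `0` coincide, leaving at most
`N * N` others.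
-/

/-- One factor of the likelihood bound, a consequence of `x ≤ exp (x - 1)` at `x = p * n / a`.
The exponential corrections of the two factors cancel in `bernoulli_likelihood_le`. -/
lemma pow_le_freq_pow_mul_exp (a : ℕ) (n p : ℝ) (hn : 0 < n) (hp : 0 ≤ p) :
    p ^ a ≤ (a / n) ^ a * Real.exp (n * p - a) := by
  rcases Nat.eq_zero_or_pos a with rfl | ha
  · simpa using mul_nonneg hn.le hp
  · have ha' : (0 : ℝ) < a := by exact_mod_cast ha
    have h1 : p * n / a ≤ Real.exp (p * n / a - 1) := by
      linarith [Real.add_one_le_exp (p * n / a - 1)]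
    have h2 : p ≤ a / n * Real.exp (p * n / a - 1) := by
      calc p = a / n * (p * n / a) := by field_simp
        _ ≤ _ := mul_le_mul_of_nonneg_left h1 (by positivity)
    calc p ^ a ≤ (a / n * Real.exp (p * n / a - 1)) ^ a := pow_le_pow_left₀ hp h2 a
      _ = (a / n) ^ a * Real.exp (n * p - a) := by
        rw [mul_pow, ← Real.exp_nat_mul]
        congr 2
        field_simp

/-- The Bernoulli likelihood is maximized at the empirical frequency. -/
lemma bernoulli_likelihood_le (a b n : ℕ) (hab : a + b = n) (hn : 0 < n) (p : ℝ)
    (hp : p ∈ Set.Icc (0 : ℝ) 1) :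
    p ^ a * (1 - p) ^ b ≤ ((a : ℝ) / n) ^ a * (1 - (a : ℝ) / n) ^ b := by
  have hn' : (0 : ℝ) < n := by exact_mod_cast hn
  have hab' : (a : ℝ) + b = n := by exact_mod_cast hab
  have hb : 1 - (a : ℝ) / n = b / n := by
    field_simp
    linarith
  have h1 := pow_le_freq_pow_mul_exp a n p hn' hp.1
  have h2 := pow_le_freq_pow_mul_exp b n (1 - p) hn' (by linarith [hp.2])
  rw [hb]
  calc p ^ a * (1 - p) ^ b
      ≤ ((a / n : ℝ) ^ a * Real.exp (n * p - a)) *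
          ((b / n : ℝ) ^ b * Real.exp (n * (1 - p) - b)) :=
        mul_le_mul h1 h2 (pow_nonneg (by linarith [hp.2]) _) (by positivity)
    _ = (a / n : ℝ) ^ a * (b / n : ℝ) ^ b *
          Real.exp ((n * p - a) + (n * (1 - p) - b)) := by
        rw [Real.exp_add]
        ring
    _ = (a / n : ℝ) ^ a * (b / n : ℝ) ^ b := by
        rw [show (n * p - a : ℝ) + (n * (1 - p) - b) = 0 by linarith]
        simp

/-- In the joint A-GLRT maximization over the binary trust vector
`t ∈ {0,1}ᴺ` and the malicious probability `p ∈ [0,1]` of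
`F(t,p) = ∏_{i : t i = 1} u i * q^(1 - y i) * (1-q)^(y i) *
         ∏_{i : t i = 0} v i * p^(1 - y i) * (1-p)^(y i)`
(with `0^0 = 1`), the set `P = {Tn/Td : Td ∈ {1,…,N}, Tn ∈ {0,…,Td}}` has cardinality
at most `N² + 1`, and a maximizer `(t*, p*)` exists with `p* ∈ P`. -/
theorem aglrt_maximizer_rational_structure
    (N : ℕ) (hN : 1 ≤ N) (y : Fin N → ℕ) (hy : ∀ i, y i ≤ 1)
    (q : ℝ) (hq : q ∈ Set.Ioo (0 : ℝ) 1)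
    (u v : Fin N → ℝ) (hu : ∀ i, 0 < u i) (hv : ∀ i, 0 < v i)
    (F : (Fin N → ℕ) → ℝ → ℝ)
    (hF : ∀ (t : Fin N → ℕ) (p : ℝ),
      F t p = (∏ i ∈ univ.filter (fun i => t i = 1),
                  u i * q ^ (1 - y i) * (1 - q) ^ (y i)) *
              (∏ i ∈ univ.filter (fun i => t i = 0),
                  v i * p ^ (1 - y i) * (1 - p) ^ (y i)))
    (P : Finset ℝ)
    (hP : P = ((Finset.range (N + 1) ×ˢ Finset.Icc 1 N).filter
        (fun pr => pr.1 ≤ pr.2)).image (fun pr => (pr.1 : ℝ) / (pr.2 : ℝ))) :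
    P.card ≤ N ^ 2 + 1 ∧
      ∃ tstar : Fin N → ℕ, ∃ pstar : ℝ,
        (∀ i, tstar i ≤ 1) ∧ pstar ∈ Set.Icc (0 : ℝ) 1 ∧ pstar ∈ P ∧
        ∀ (t : Fin N → ℕ) (p : ℝ), (∀ i, t i ≤ 1) → p ∈ Set.Icc (0 : ℝ) 1 →
          F t p ≤ F tstar pstar := by
  subst hP
  constructor
  · calc _ ≤ (insert (0 : ℝ) ((Finset.Icc 1 N ×ˢ Finset.Icc 1 N).image
          (fun pr : ℕ × ℕ => (pr.1 : ℝ) / (pr.2 : ℝ)))).card := by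
          apply Finset.card_le_card
          intro x hx
          simp only [mem_image, mem_filter, mem_product, mem_range, mem_Icc, Prod.exists,
            mem_insert] at hx ⊢
          obtain ⟨a, b, ⟨⟨h1, h2⟩, h3⟩, rfl⟩ := hx
          rcases Nat.eq_zero_or_pos a with rfl | ha
          · left
            simp
          · exact Or.inr ⟨a, b, ⟨⟨ha, by omega⟩, h2⟩, rfl⟩
      _ ≤ _ + 1 := Finset.card_insert_le _ _
      _ ≤ (Finset.Icc 1 N ×ˢ Finset.Icc 1 N).card + 1 :=
          Nat.add_le_add_right Finset.card_image_le 1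
      _ = N ^ 2 + 1 := by simp [sq]
  · set P : Finset ℝ := ((Finset.range (N + 1) ×ˢ Finset.Icc 1 N).filter
        (fun pr => pr.1 ≤ pr.2)).image (fun pr => (pr.1 : ℝ) / (pr.2 : ℝ)) with hP
    have memP : ∀ a n : ℕ, 0 < n → n ≤ N → a ≤ n → (a : ℝ) / n ∈ P := by
      intro a n h1 h2 h3
      rw [hP, mem_image]
      refine ⟨(a, n), ?_, rfl⟩
      simp only [mem_filter, mem_product, mem_range, mem_Icc]
      omega
    have P_sub : ∀ p ∈ P, p ∈ Set.Icc (0 : ℝ) 1 := by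
      intro p hp
      rw [hP, mem_image] at hp
      obtain ⟨⟨a, n⟩, h, rfl⟩ := hp
      simp only [mem_filter] at h
      exact ⟨by positivity, div_le_one_of_le₀ (by exact_mod_cast h.2) (by positivity)⟩
    have hzero : ((0 : ℕ) : ℝ) / (1 : ℕ) ∈ P := memP 0 1 one_pos hN (by omega)
    have dominated : ∀ (t : Fin N → ℕ) (p : ℝ), p ∈ Set.Icc (0 : ℝ) 1 →
        ∃ p' ∈ P, F t p ≤ F t p' := by
      intro t p hp
      set S := univ.filter (fun i => t i = 0) with hS
      have expand : ∀ r : ℝ, ∏ i ∈ S, v i * r ^ (1 - y i) * (1 - r) ^ (y i) =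
          (∏ i ∈ S, v i) * (r ^ (∑ i ∈ S, (1 - y i)) * (1 - r) ^ (∑ i ∈ S, y i)) := by
        intro r
        rw [prod_mul_distrib, prod_mul_distrib, prod_pow_eq_pow_sum, prod_pow_eq_pow_sum,
          mul_assoc]
      have hcount : ∑ i ∈ S, (1 - y i) + ∑ i ∈ S, y i = S.card := by
        rw [← sum_add_distrib, card_eq_sum_ones]
        exact sum_congr rfl fun i _ => Nat.sub_add_cancel (hy i)
      rcases Nat.eq_zero_or_pos S.card with h0 | hpos
      · refine ⟨_, hzero, le_of_eq ?_⟩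
        rw [hF, hF, ← hS, card_eq_zero.mp h0]
        simp
      · refine ⟨((∑ i ∈ S, (1 - y i) : ℕ) : ℝ) / S.card,
          memP _ _ hpos ((card_le_univ S).trans_eq (Fintype.card_fin N)) (by omega), ?_⟩
        rw [hF, hF, ← hS, expand, expand]
        have hq0 := hq.1
        have hq1 : 0 < 1 - q := sub_pos.mpr hq.2
        refine mul_le_mul_of_nonneg_left (mul_le_mul_of_nonneg_left
          (bernoulli_likelihood_le _ _ _ hcount hpos p hp)
          (prod_nonneg fun i _ => (hv i).le)) (prod_nonneg fun i _ => ?_)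
        have := hu i
        positivity
    obtain ⟨⟨ts, ps⟩, hmem, hmax⟩ := Finset.exists_max_image
      (Fintype.piFinset (fun _ : Fin N => Finset.range 2) ×ˢ P) (fun z => F z.1 z.2)
      ⟨(fun _ => 0, _), by
        rw [mem_product]
        exact ⟨by simp, hzero⟩⟩
    simp only [mem_product, Fintype.mem_piFinset, mem_range] at hmem
    refine ⟨ts, ps, fun i => Nat.le_of_lt_succ (hmem.1 i), P_sub ps hmem.2, hmem.2, ?_⟩
    intro t p ht hp
    obtain ⟨p', hp', hle⟩ := dominated t p hp
    refine hle.trans (hmax (t, p') ?_)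
    simp only [mem_product, Fintype.mem_piFinset, mem_range]
    exact ⟨fun i => Nat.lt_succ_of_le (ht i), hp'⟩
end

section
/- Let Ω be a nonempty finite type and let R : Ω → ℝ be any function. Then for every γ ∈ ℝ and every p ∈ [0,1], there exist γ' in the range of R and p' ∈ [0,1] such that for every probability measure μ on Ω, μ({ω : R(ω) > γ'}) + p' · μ({ω : R(ω) = γ'}) = μ({ω : R(ω) > γ}) + p · μ({ω : R(ω) = γ}). -/
/-!
If `γ` is attained there is nothing to change. Otherwise ties at `γ` never occur, so the test
accepts exactly on `{γ < R}`. When this set is nonempty, it equals `{γ' ≤ R}` for `γ'` the least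
value of `R` above `γ`, so `(γ', 1)` is the same test; when it is empty, `(max R, 0)` is. Since the
acceptance events agree as sets, the choice does not depend on the measure.
-/

open MeasureTheory

/-- On a nonempty finite sample space, any randomized threshold test
`(γ, p)` for the statistic `R`, accepting with probability
`μ(R > γ) + p · μ(R = γ)`, can be replicated simultaneously under all probability
measures by a test `(γ', p')` whose threshold `γ'` lies in the range of `R`. -/
theorem randomized_threshold_reduction_to_attained_values
    (Ω : Type*) [Fintype Ω] [Nonempty Ω] [MeasurableSpace Ω]
    [MeasurableSingletonClass Ω]
    (R : Ω → ℝ) (γ : ℝ) (p : ℝ) (hp : p ∈ Set.Icc (0 : ℝ) 1) :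
    ∃ γ' ∈ Set.range R, ∃ p' ∈ Set.Icc (0 : ℝ) 1,
      ∀ μ : Measure Ω, IsProbabilityMeasure μ →
        (μ {ω | γ' < R ω}).toReal + p' * (μ {ω | R ω = γ'}).toReal =
          (μ {ω | γ < R ω}).toReal + p * (μ {ω | R ω = γ}).toReal := by
  by_cases hγ : γ ∈ Set.range R
  · exact ⟨γ, hγ, p, hp, fun _ _ => rfl⟩
  have hne : ∀ ω, R ω ≠ γ := fun ω h => hγ ⟨ω, h⟩
  have hempty : {ω | R ω = γ} = ∅ := Set.eq_empty_of_forall_notMem hne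
  by_cases hex : {ω | γ < R ω}.Nonempty
  · -- The least attained value above `γ`, always accepted on ties, gives `{γ' ≤ R} = {γ < R}`.
    obtain ⟨ω₀, h₀, hmin⟩ := Set.exists_min_image _ R (Set.toFinite _) hex
    refine ⟨R ω₀, ⟨ω₀, rfl⟩, 1, by simp, fun μ _ => ?_⟩
    have hunion : {ω | γ < R ω} = {ω | R ω₀ < R ω} ∪ {ω | R ω = R ω₀} := by
      ext ω
      simp only [Set.mem_setOf_eq, Set.mem_union]
      refine ⟨fun h => (hmin ω h).lt_or_eq.imp id Eq.symm, ?_⟩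
      rintro (h | h)
      · exact lt_trans h₀ h
      · exact h ▸ h₀
    have hdisj : Disjoint {ω | R ω₀ < R ω} {ω | R ω = R ω₀} :=
      Set.disjoint_left.2 fun ω h h' => h.ne' h'
    rw [hempty, hunion, measure_union hdisj (Set.toFinite _).measurableSet,
      ENNReal.toReal_add (measure_ne_top _ _) (measure_ne_top _ _)]
    simp
  · -- `R < γ` everywhere: the maximum of `R`, never accepted on ties, rejects surely as well.
    obtain ⟨ω₀, hmax⟩ := Finite.exists_max R
    refine ⟨R ω₀, ⟨ω₀, rfl⟩, 0, by simp, fun μ _ => ?_⟩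
    have hnone : {ω | R ω₀ < R ω} = ∅ :=
      Set.eq_empty_of_forall_notMem fun ω h => not_lt.2 (hmax ω) h
    rw [hempty, hnone, Set.not_nonempty_iff_eq_empty.1 hex]
    simp
end

section
/- Let P_FA ∈ (0, 1/2) and P_MD ∈ (0, 1/2). Define w_0 = log((1 − P_FA)/P_MD) and w_1 = log((1 − P_MD)/P_FA). Then w_0 > 0, w_1 > 0, and w_0/(w_0 + w_1) > P_FA; equivalently, (1 − P_FA) · log((1 − P_FA)/P_MD) > P_FA · log((1 − P_MD)/P_FA). -/
/-! The last inequality says that the relative entropy of the distribution `(1 - PFA, PFA)` with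
respect to `(PMD, 1 - PMD)` is positive (Gibbs' inequality; the two differ since `PFA + PMD < 1`).
Both sides are separated by `1 - PFA - PMD`, using `log x < x - 1` for `x ≠ 1`. The threshold bound
is the same inequality after clearing the positive denominator `w0 + w1`. -/

/-- For `P_FA, P_MD ∈ (0, 1/2)`, the log-likelihood weights
`w₀ = log((1 − P_FA)/P_MD)` and `w₁ = log((1 − P_MD)/P_FA)` are positive and
`w₀/(w₀ + w₁) > P_FA`; equivalently,
`(1 − P_FA)·log((1 − P_FA)/P_MD) > P_FA·log((1 − P_MD)/P_FA)`. -/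
theorem normalized_threshold_exceeds_false_alarm
    (PFA PMD : ℝ) (hFA : PFA ∈ Set.Ioo (0 : ℝ) (1 / 2))
    (hMD : PMD ∈ Set.Ioo (0 : ℝ) (1 / 2))
    (w0 w1 : ℝ)
    (hw0 : w0 = Real.log ((1 - PFA) / PMD))
    (hw1 : w1 = Real.log ((1 - PMD) / PFA)) :
    0 < w0 ∧ 0 < w1 ∧ PFA < w0 / (w0 + w1) ∧
      PFA * Real.log ((1 - PMD) / PFA) < (1 - PFA) * Real.log ((1 - PFA) / PMD) := by
  obtain ⟨hp, hp2⟩ := hFA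
  obtain ⟨hq, hq2⟩ := hMD
  have h1p : 0 < 1 - PFA := by linarith
  have h1q : 0 < 1 - PMD := by linarith
  have hw0pos : 0 < w0 := by
    rw [hw0]
    exact Real.log_pos ((one_lt_div hq).2 (by linarith))
  have hw1pos : 0 < w1 := by
    rw [hw1]
    exact Real.log_pos ((one_lt_div hp).2 (by linarith))
  have upper : PFA * w1 < 1 - PFA - PMD := by
    have h := Real.log_lt_sub_one_of_pos (div_pos h1q hp)
      (ne_of_gt ((one_lt_div hp).2 (by linarith)))
    rw [← hw1] at h
    calc PFA * w1 < PFA * ((1 - PMD) / PFA - 1) := mul_lt_mul_of_pos_left h hp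
      _ = 1 - PFA - PMD := by field_simp; ring
  have lower : 1 - PFA - PMD < (1 - PFA) * w0 := by
    -- The logarithm bound is applied to the reciprocal ratio, which turns it into a lower bound.
    have h := Real.log_lt_sub_one_of_pos (div_pos hq h1p)
      (ne_of_lt ((div_lt_one h1p).2 (by linarith)))
    rw [← inv_div, Real.log_inv, ← hw0, inv_div] at h
    calc 1 - PFA - PMD = (1 - PFA) * (1 - PMD / (1 - PFA)) := by field_simp
      _ < (1 - PFA) * w0 := mul_lt_mul_of_pos_left (by linarith) h1p
  have key : PFA * w1 < (1 - PFA) * w0 := upper.trans lower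
  refine ⟨hw0pos, hw1pos, ?_, ?_⟩
  · rw [lt_div_iff₀ (add_pos hw0pos hw1pos)]
    linarith
  · rwa [← hw0, ← hw1]
end

section
/- Let P_FA ∈ (0, 1/2), P_MD ∈ (0, 1/2), γ_TS ∈ ℝ, and fix k_M ∈ ℕ. Define w_0 = log((1−P_FA)/P_MD), w_1 = log((1−P_MD)/P_FA), and for k_L ≥ 1 define γ̃_FA(k_L, k_M) = (γ_TS − k_M·w_1 + k_L·w_0)/(k_L·(w_0 + w_1)). Then γ̃_FA(k_L, k_M) → w_0/(w_0 + w_1) as k_L → ∞, and there exists K ∈ ℕ such that for all k_L ≥ K, P_FA < γ̃_FA(k_L, k_M) < 1. -/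
/-!
As `kL → ∞` the constant `γTS - kM * w1` is negligible, so the normalized threshold tends to
`w0 / (w0 + w1)`. Both weights are positive, so this limit is below `1`. It exceeds `PFA` because
`(1 - PFA) * w0 - PFA * w1` is the Kullback–Leibler divergence from `Bernoulli(PFA)` to
`Bernoulli(1 - PMD)`, which is positive since `PFA < 1/2 < 1 - PMD`; this is proved from
`log x < x - 1`. The eventual bounds then follow since `(PFA, 1)` is a neighbourhood of the limit.
-/

open Filter Topology

/-- Strict positivity of the Kullback–Leibler divergence between the Bernoulli laws with parameters
`p` and `1 - q`, in terms of the log-likelihood-ratio weights. -/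
lemma mul_log_lt_mul_log {p q : ℝ} (hp : p ∈ Set.Ioo (0 : ℝ) (1 / 2))
    (hq : q ∈ Set.Ioo (0 : ℝ) (1 / 2)) :
    p * Real.log ((1 - q) / p) < (1 - p) * Real.log ((1 - p) / q) := by
  obtain ⟨hp0, hp1⟩ := hp
  obtain ⟨hq0, hq1⟩ := hq
  have hp' : 0 < 1 - p := by linarith
  have hq' : 0 < 1 - q := by linarith
  have hne : (1 - q) / p ≠ 1 := by
    rw [Ne, div_eq_one_iff_eq hp0.ne']
    intro h
    linarith
  have h1 : p * Real.log ((1 - q) / p) < p * ((1 - q) / p - 1) :=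
    mul_lt_mul_of_pos_left (Real.log_lt_sub_one_of_pos (by positivity) hne) hp0
  have h2 : (1 - p) * Real.log (q / (1 - p)) ≤ (1 - p) * (q / (1 - p) - 1) :=
    mul_le_mul_of_nonneg_left (Real.log_le_sub_one_of_pos (by positivity)) hp'.le
  have e1 : p * ((1 - q) / p - 1) = 1 - q - p := by field_simp
  have e2 : (1 - p) * (q / (1 - p) - 1) = q - (1 - p) := by field_simp
  have e3 : Real.log (q / (1 - p)) = -Real.log ((1 - p) / q) := by
    rw [← Real.log_inv, inv_div]
  rw [e1] at h1
  rw [e2, e3] at h2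
  linarith

/-- With `P_FA, P_MD ∈ (0, 1/2)`, weights `w₀ = log((1−P_FA)/P_MD)`,
`w₁ = log((1−P_MD)/P_FA)`, threshold `γ_TS` and fixed `k_M`, the normalized threshold
`γ̃_FA(k_L, k_M) = (γ_TS − k_M·w₁ + k_L·w₀)/(k_L·(w₀+w₁))` tends to `w₀/(w₀+w₁)` as
`k_L → ∞`, and for all sufficiently large `k_L`, `P_FA < γ̃_FA(k_L, k_M) < 1`. -/
theorem normalized_threshold_limit_and_eventual_bounds
    (PFA PMD : ℝ) (hFA : PFA ∈ Set.Ioo (0 : ℝ) (1 / 2))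
    (hMD : PMD ∈ Set.Ioo (0 : ℝ) (1 / 2))
    (γTS : ℝ) (kM : ℕ)
    (w0 w1 : ℝ)
    (hw0 : w0 = Real.log ((1 - PFA) / PMD))
    (hw1 : w1 = Real.log ((1 - PMD) / PFA))
    (γtilde : ℕ → ℝ)
    (hγ : ∀ kL : ℕ, 1 ≤ kL →
      γtilde kL = (γTS - kM * w1 + kL * w0) / (kL * (w0 + w1))) :
    Tendsto γtilde atTop (nhds (w0 / (w0 + w1))) ∧
      ∃ K : ℕ, ∀ kL : ℕ, K ≤ kL → PFA < γtilde kL ∧ γtilde kL < 1 := by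
  have hKL : PFA * w1 < (1 - PFA) * w0 := by
    rw [hw0, hw1]
    exact mul_log_lt_mul_log hFA hMD
  obtain ⟨hp0, hp1⟩ := hFA
  obtain ⟨hq0, hq1⟩ := hMD
  have h0 : 0 < w0 := by
    rw [hw0]
    exact Real.log_pos ((one_lt_div hq0).2 (by linarith))
  have h1 : 0 < w1 := by
    rw [hw1]
    exact Real.log_pos ((one_lt_div hp0).2 (by linarith))
  have hs : 0 < w0 + w1 := by positivity
  have hlim : Tendsto γtilde atTop (nhds (w0 / (w0 + w1))) := by
    have h := (tendsto_const_div_atTop_nhds_zero_nat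
      ((γTS - kM * w1) / (w0 + w1))).add_const (w0 / (w0 + w1))
    rw [zero_add] at h
    refine h.congr' ?_
    filter_upwards [eventually_ge_atTop 1] with k hk
    have hk' : (k : ℝ) ≠ 0 := by exact_mod_cast (by omega : k ≠ 0)
    rw [hγ k hk]
    field_simp
  refine ⟨hlim, eventually_atTop.1 ?_⟩
  exact (hlim.eventually_const_lt ((lt_div_iff₀ hs).2 (by linarith))).and
    (hlim.eventually_lt_const ((div_lt_one hs).2 (by linarith)))
end
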